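/- Let n, N be positive integers, T ≥ 0, and let s_1,…,s_N : [0,T] → ℝ be scalar scheduling signals such that for every t ∈ [0,T] at least one s_i(t) is nonzero, and such that ŝ := inf_{t∈[0,T]} Σ_{i=1}^N s_i(t)² > 0. Let u_c : [0,T] → ℝⁿ and for each i let y_i : [0,T] → ℝⁿ satisfy ∫₀ᵀ s_i(t) u_c(t)ᵀ y_i(t) dt ≥ β_i + δ_i ∫₀ᵀ s_i(t)² ‖u_c(t)‖² dt with β_i ≤ 0 and δ_i > 0 (all integrands assumed integrable). Then with y_c(t) = Σ_{i=1}^N s_i(t) y_i(t) one has ∫₀ᵀ u_c(t)ᵀ y_c(t) dt ≥ Σ_i β_i + δ_min ŝ ∫₀ᵀ ‖u_c(t)‖² dt, where δ_min = min_i δ_i. (This is the scalar-scheduling special case Φ_i(t) = s_i(t)·I, α_i = 1 of matrix gain-scheduling, recovering the scalar gain-scheduling ISP result.) -/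

import Mathlib

open MeasureTheory Matrix

/-- **Scalar gain-scheduling ISP result** (the special case `Φᵢ(t) = sᵢ(t)·I`, `αᵢ = 1`
of matrix gain-scheduling): with `y_c(t) = Σᵢ sᵢ(t) yᵢ(t)`,
`⟨u_c, y_c⟩_T ≥ Σᵢ βᵢ + δ_min ŝ ‖u_c‖²_{2T}` where `δ_min = minᵢ δᵢ`. -/
theorem scalar_gain_scheduled_ISP
    (n N : ℕ) (hn : 0 < n) (hN : 0 < N) (T : ℝ) (hT : 0 ≤ T)
    (s : Fin N → ℝ → ℝ)
    -- at every time at least one scheduling signal is nonzero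
    (hactive : ∀ t ∈ Set.Icc (0 : ℝ) T, ∃ i : Fin N, s i t ≠ 0)
    -- ŝ := inf over [0,T] of Σᵢ sᵢ(t)² is strictly positive
    (shat : ℝ)
    (hshat : shat = ⨅ t : Set.Icc (0 : ℝ) T, ∑ i : Fin N, s i (t : ℝ) ^ 2)
    (hshatpos : 0 < shat)
    (uc : ℝ → Fin n → ℝ) (y : Fin N → ℝ → Fin n → ℝ)
    (β δ : Fin N → ℝ) (hβ : ∀ i, β i ≤ 0) (hδ : ∀ i, 0 < δ i)
    -- integrability of all integrands on [0, T]
    (hint₁ : ∀ i, IntervalIntegrable (fun t => s i t * (uc t ⬝ᵥ y i t)) volume 0 T)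
    (hint₂ : ∀ i, IntervalIntegrable (fun t => s i t ^ 2 * (uc t ⬝ᵥ uc t)) volume 0 T)
    (hint₃ : IntervalIntegrable (fun t => uc t ⬝ᵥ uc t) volume 0 T)
    (hint₄ : IntervalIntegrable
      (fun t => uc t ⬝ᵥ (∑ i : Fin N, s i t • y i t)) volume 0 T)
    -- each subsystem satisfies the ISP inequality with input `uᵢ = sᵢ u_c`
    (hISP : ∀ i, (∫ t in (0:ℝ)..T, s i t * (uc t ⬝ᵥ y i t))
      ≥ β i + δ i * ∫ t in (0:ℝ)..T, s i t ^ 2 * (uc t ⬝ᵥ uc t)) :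
    (∫ t in (0:ℝ)..T, uc t ⬝ᵥ (∑ i : Fin N, s i t • y i t))
      ≥ (∑ i : Fin N, β i)
        + (⨅ i : Fin N, δ i) * shat * ∫ t in (0:ℝ)..T, uc t ⬝ᵥ uc t := by
  have hq : ∀ t, 0 ≤ uc t ⬝ᵥ uc t := fun t =>
    Finset.sum_nonneg fun i _ => mul_self_nonneg _
  haveI : Nonempty (Fin N) := ⟨⟨0, hN⟩⟩
  have hd0 : 0 ≤ ⨅ i : Fin N, δ i := Real.iInf_nonneg fun i => (hδ i).le
  have hdle : ∀ i, (⨅ i : Fin N, δ i) ≤ δ i := fun i =>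
    ciInf_le (Set.finite_range δ).bddBelow i
  have hsle : ∀ t ∈ Set.Icc (0 : ℝ) T, shat ≤ ∑ i : Fin N, s i t ^ 2 := by
    intro t ht
    rw [hshat]
    refine ciInf_le (f := fun t : Set.Icc (0 : ℝ) T => ∑ i : Fin N, s i (t : ℝ) ^ 2)
      ⟨0, ?_⟩ ⟨t, ht⟩
    rintro _ ⟨x, rfl⟩
    exact Finset.sum_nonneg fun i _ => sq_nonneg _
  have h1 : (∫ t in (0:ℝ)..T, uc t ⬝ᵥ (∑ i : Fin N, s i t • y i t))
      = ∑ i : Fin N, ∫ t in (0:ℝ)..T, s i t * (uc t ⬝ᵥ y i t) := by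
    rw [← intervalIntegral.integral_finsetSum fun i _ => hint₁ i]
    congr 1
    ext t
    rw [dotProduct_sum]
    simp [dotProduct_smul]
  have h2 : shat * (∫ t in (0:ℝ)..T, uc t ⬝ᵥ uc t)
      ≤ ∑ i : Fin N, ∫ t in (0:ℝ)..T, s i t ^ 2 * (uc t ⬝ᵥ uc t) := by
    rw [← intervalIntegral.integral_finsetSum fun i _ => hint₂ i,
      ← intervalIntegral.integral_const_mul]
    refine intervalIntegral.integral_mono_on hT (hint₃.const_mul _) ?_ ?_
    · simpa only [Finset.sum_fn] using
        IntervalIntegrable.sum Finset.univ fun i _ => hint₂ i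
    · intro t ht
      rw [← Finset.sum_mul]
      exact mul_le_mul_of_nonneg_right (hsle t ht) (hq t)
  have h3 : ∀ i, 0 ≤ ∫ t in (0:ℝ)..T, s i t ^ 2 * (uc t ⬝ᵥ uc t) := fun i =>
    intervalIntegral.integral_nonneg hT fun t _ => mul_nonneg (sq_nonneg _) (hq t)
  rw [h1, ge_iff_le, mul_assoc]
  calc _ ≤ (∑ i : Fin N, β i) + (⨅ i : Fin N, δ i) *
        ∑ i : Fin N, ∫ t in (0:ℝ)..T, s i t ^ 2 * (uc t ⬝ᵥ uc t) := by
        gcongr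
    _ = ∑ i : Fin N, (β i + (⨅ i : Fin N, δ i) *
        ∫ t in (0:ℝ)..T, s i t ^ 2 * (uc t ⬝ᵥ uc t)) := by
        rw [Finset.sum_add_distrib, Finset.mul_sum]
    _ ≤ _ := Finset.sum_le_sum fun i _ =>
        le_trans (by have := mul_le_mul_of_nonneg_right (hdle i) (h3 i); linarith) (hISP i)
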